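/- Cauchy-type coefficient estimate (Theorem 5.4): For $\delta>0$ let $\Omega(\delta,\infty):=\{w\in\mathbb C:\operatorname{Re} w<\log\delta\}$, the logarithm of the punctured disc of radius $\delta$ in the logarithmic cover of $\mathbb C\setminus\{0\}$ (so $w=\log z$ and $z^\alpha=e^{\alpha w}$). Let $X$ be a complex Banach space. A generalized power series with coefficients in $X$ is a family $(a_\alpha)_{\alpha\in S}$ in $X$ indexed by a countable well-ordered set $S\subset[0,\infty)$; it converges normally on $\Omega(\delta,\infty)$ if $\sum_{\alpha\in S}\|a_\alpha\|\delta^\alpha<\infty$. Let $\hat R>0$, $\varepsilon>0$, and let $f:\Omega(\hat R+\varepsilon,\infty)\to X$ be holomorphic and bounded. Assume $f$ is $z$-Hahn holomorphic, i.e. there are $\delta_0\in(0,\hat R+\varepsilon]$ and a generalized power series $(a_\alpha)_{\alpha\in S}$ converging normally on $\Omega(\delta_0,\infty)$ such that $f(w)=\sum_{\alpha\in S}a_\alpha e^{\alpha w}$ for all $w\in\Omega(\delta_0,\infty)$ (no normal convergence on $\Omega(\hat R,\infty)$ is assumed). Then for every $R$ with $0<R<\hat R$ one has, in $[0,\infty]$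 with $0\cdot\infty=0$, $$\sum_{\alpha\in S}\|a_\alpha\|R^\alpha\le\Big(\sup_{\operatorname{Re} w=\log\hat R}\|f(w)\|\Big)\cdot\sum_{\alpha\in S}(R/\hat R)^\alpha .$$ In particular, if $\sum_{\alpha\in S}(R/\hat R)^\alpha<\infty$ then the series converges normally on $\Omega(R,\infty)$. -/

import Mathlib

/-- The logarithm of the punctured disc of radius `δ` and half-opening angle `σ`
on the logarithmic cover of `ℂ \ {0}`; for `σ = ⊤` it is the half-plane `Re w < log δ`. -/
def Omega (δ : ℝ) (σ : ENNReal) : Set ℂ :=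
  {w : ℂ | w.re < Real.log δ ∧ ENNReal.ofReal |w.im| < σ}

/-- A generalized power series with coefficients in `X`: a family in `X` indexed by a countable
well-ordered set of non-negative reals. -/
structure GenPowerSeries (X : Type*) where
  exponents : Set ℝ
  countable : exponents.Countable
  isWF : exponents.IsWF
  nonneg : ∀ α ∈ exponents, 0 ≤ α
  coeff : exponents → X

namespace GenPowerSeries

/-- Normal convergence on the punctured disc of radius `δ` (for every half-opening angle):
the supremum of `‖exp (α * w)‖` over `Omega δ σ` is `δ ^ α`. -/
def ConvergesNormally {X : Type*} [NormedAddCommGroup X] (p : GenPowerSeries X) (δ : ℝ) : Prop :=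
  Summable fun α : p.exponents => ‖p.coeff α‖ * δ ^ (α : ℝ)

/-- `p` is the expansion at `z = 0` (that is, as `Re w → -∞`) of `f`, a function of `w = log z`:
on some punctured disc `p` converges normally and its sum is `f`. -/
def IsExpansionOf {X : Type*} [NormedAddCommGroup X] [NormedSpace ℂ X]
    (p : GenPowerSeries X) (f : ℂ → X) : Prop :=
  ∃ δ₀ : ℝ, 0 < δ₀ ∧ p.ConvergesNormally δ₀ ∧
    ∀ w ∈ Omega δ₀ ⊤,
      HasSum (fun α : p.exponents => Complex.exp (((α : ℝ) : ℂ) * w) • p.coeff α) (f w)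

end GenPowerSeries

open Filter Topology

/-- The integral of a non-constant character over any symmetric interval is bounded. -/
theorem norm_integral_exp_mul_I_le {c : ℝ} (hc : c ≠ 0) (T : ℝ) :
    ‖∫ y in (-T)..T, Complex.exp ((c : ℂ) * Complex.I * y)‖ ≤ 2 / |c| := by
  have hcI : (c : ℂ) * Complex.I ≠ 0 := by simp [hc]
  have hn : ∀ t : ℝ, ‖Complex.exp ((c : ℂ) * Complex.I * t)‖ = 1 := fun t => by
    rw [show (c : ℂ) * Complex.I * t = ((c * t : ℝ) : ℂ) * Complex.I by push_cast; ring]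
    exact Complex.norm_exp_ofReal_mul_I _
  rw [integral_exp_mul_complex hcI, norm_div]
  have hden : ‖(c : ℂ) * Complex.I‖ = |c| := by simp
  rw [hden]
  gcongr
  refine (norm_sub_le _ _).trans ?_
  rw [hn, hn]
  norm_num

/-- The mean value of a character over `[-T, T]`, as `T → ∞`. -/
theorem tendsto_mean_exp_mul_I (c : ℝ) :
    Tendsto (fun T : ℝ => ((2 * T : ℝ) : ℂ)⁻¹ *
      ∫ y in (-T)..T, Complex.exp ((c : ℂ) * Complex.I * y)) atTop
      (𝓝 (if c = 0 then 1 else 0)) := by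
  split_ifs with hc
  · subst hc
    refine tendsto_const_nhds.congr' ?_
    filter_upwards [eventually_gt_atTop 0] with T hT
    have : ((2 * T : ℝ) : ℂ) ≠ 0 := by
      exact_mod_cast (by positivity : (2 * T : ℝ) ≠ 0)
    simp only [Complex.ofReal_zero, zero_mul, Complex.exp_zero, intervalIntegral.integral_const,
      sub_neg_eq_add, ← two_mul, Complex.real_smul, mul_one]
    rw [inv_mul_cancel₀ this]
  · have hlim : Tendsto (fun T : ℝ => (2 * T)⁻¹ * (2 / |c|)) atTop (𝓝 0) := by
      simpa using (tendsto_inv_atTop_zero.comp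
        (tendsto_id.const_mul_atTop (two_pos : (0 : ℝ) < 2))).mul_const (2 / |c|)
    refine squeeze_zero_norm' ?_ hlim
    filter_upwards [eventually_gt_atTop 0] with T hT
    rw [norm_mul, norm_inv, Complex.norm_real, Real.norm_of_nonneg (by positivity)]
    gcongr
    exact norm_integral_exp_mul_I_le hc T

/-- Means of characters over `[-T, T]` have norm at most one. -/
theorem norm_mean_exp_mul_I_le (c : ℝ) {T : ℝ} (hT : 0 < T) :
    ‖((2 * T : ℝ) : ℂ)⁻¹ * ∫ y in (-T)..T, Complex.exp ((c : ℂ) * Complex.I * y)‖ ≤ 1 := by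
  have h : ‖∫ y in (-T)..T, Complex.exp ((c : ℂ) * Complex.I * y)‖ ≤ 1 * |T - -T| := by
    refine intervalIntegral.norm_integral_le_of_norm_le_const fun t _ => ?_
    rw [show (c : ℂ) * Complex.I * t = ((c * t : ℝ) : ℂ) * Complex.I by push_cast; ring]
    exact (Complex.norm_exp_ofReal_mul_I _).le
  rw [abs_of_pos (by linarith), one_mul] at h
  rw [norm_mul, norm_inv, Complex.norm_real, Real.norm_of_nonneg (by positivity),
    inv_mul_le_one₀ (by positivity)]
  linarith

/-- Bohr's formula for the coefficients of an absolutely convergent series of characters. -/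
theorem tendsto_mean_of_hasSum_exp {ι X : Type*} [Countable ι] [NormedAddCommGroup X]
    [NormedSpace ℂ X] [CompleteSpace X] {b : ι → X} (hb : Summable fun j => ‖b j‖)
    {freq : ι → ℝ} {i : ι} (hfreq : ∀ j, freq j = 0 ↔ j = i) {F : ℝ → X}
    (hF : ∀ y : ℝ, HasSum (fun j => Complex.exp ((freq j : ℂ) * Complex.I * y) • b j) (F y)) :
    Tendsto (fun T : ℝ => ((2 * T : ℝ) : ℂ)⁻¹ • ∫ y in (-T)..T, F y) atTop (𝓝 (b i)) := by
  have hint : ∀ T : ℝ, HasSum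
      (fun j => (((2 * T : ℝ) : ℂ)⁻¹ *
        ∫ y in (-T)..T, Complex.exp ((freq j : ℂ) * Complex.I * y)) • b j)
      (((2 * T : ℝ) : ℂ)⁻¹ • ∫ y in (-T)..T, F y) := by
    intro T
    have h := intervalIntegral.hasSum_integral_of_dominated_convergence
      (μ := MeasureTheory.volume) (a := -T) (b := T)
      (F := fun j (y : ℝ) => Complex.exp ((freq j : ℂ) * Complex.I * y) • b j) (f := F)
      (fun j _ => ‖b j‖)
      (fun j => (Continuous.aestronglyMeasurable (by fun_prop)))
      (fun j => Eventually.of_forall fun t _ => by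
        rw [norm_smul, show (freq j : ℂ) * Complex.I * t =
          ((freq j * t : ℝ) : ℂ) * Complex.I by push_cast; ring,
          Complex.norm_exp_ofReal_mul_I, one_mul])
      (Eventually.of_forall fun _ _ => hb)
      intervalIntegrable_const
      (Eventually.of_forall fun t _ => hF t)
    simpa only [intervalIntegral.integral_smul_const, smul_smul] using
      h.const_smul (((2 * T : ℝ) : ℂ)⁻¹)
  have hlim := tendsto_tsum_of_dominated_convergence (𝓕 := atTop)
    (f := fun (T : ℝ) j => (((2 * T : ℝ) : ℂ)⁻¹ *
        ∫ y in (-T)..T, Complex.exp ((freq j : ℂ) * Complex.I * y)) • b j)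
    (g := fun j => (if freq j = 0 then (1 : ℂ) else 0) • b j) hb
    (fun j => (tendsto_mean_exp_mul_I (freq j)).smul_const (b j))
    (by
      filter_upwards [eventually_gt_atTop 0] with T hT j
      rw [norm_smul]
      exact mul_le_of_le_one_left (norm_nonneg _) (norm_mean_exp_mul_I_le _ hT))
  simp only [fun T => (hint T).tsum_eq] at hlim
  rw [tsum_eq_single i fun j hj => by simp [hfreq, hj]] at hlim
  simpa [(hfreq i).2 rfl] using hlim

/-- Vertical integrals of a function that is holomorphic and bounded on a vertical strip differ by
a quantity bounded independently of the height. -/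
theorem norm_vertical_integral_sub_le {X : Type*} [NormedAddCommGroup X] [NormedSpace ℂ X]
    {g : ℂ → X} {x₀ x₁ K : ℝ} (hx : x₀ ≤ x₁)
    (hg : DifferentiableOn ℂ g {w : ℂ | w.re ∈ Set.Icc x₀ x₁})
    (hK : ∀ w : ℂ, w.re ∈ Set.Icc x₀ x₁ → ‖g w‖ ≤ K) (T : ℝ) :
    ‖(∫ y in (-T)..T, g (x₀ + y * Complex.I)) - ∫ y in (-T)..T, g (x₁ + y * Complex.I)‖ ≤
      2 * (K * (x₁ - x₀)) := by
  have hrect := Complex.integral_boundary_rect_eq_zero_of_differentiableOn g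
    ⟨x₀, -T⟩ ⟨x₁, T⟩ (hg.mono fun w hw => by
      have := (Complex.mem_reProdIm.1 hw).1
      simpa [Set.uIcc_of_le hx] using this)
  simp only at hrect
  have hhor : ∀ t : ℝ, ‖∫ x in x₀..x₁, g (x + t * Complex.I)‖ ≤ K * (x₁ - x₀) := fun t => by
    have := intervalIntegral.norm_integral_le_of_norm_le_const (a := x₀) (b := x₁) (C := K)
      (f := fun x : ℝ => g (x + t * Complex.I)) fun x hx' => hK _ (by
        rw [Set.uIoc_of_le hx] at hx'
        simpa using Set.Ioc_subset_Icc_self hx')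
    rwa [abs_of_nonneg (sub_nonneg.2 hx)] at this
  set A := ∫ y in (-T)..T, g (x₀ + y * Complex.I)
  set B := ∫ y in (-T)..T, g (x₁ + y * Complex.I)
  have hAB : Complex.I • (A - B) = (∫ x in x₀..x₁, g (x + ((-T : ℝ) : ℂ) * Complex.I)) -
      ∫ x in x₀..x₁, g (x + T * Complex.I) := by
    rw [smul_sub, ← sub_eq_zero, ← neg_eq_zero, ← hrect]
    abel
  calc ‖A - B‖ = ‖Complex.I • (A - B)‖ := by rw [norm_smul, Complex.norm_I, one_mul]
    _ ≤ K * (x₁ - x₀) + K * (x₁ - x₀) := by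
      rw [hAB]
      exact (norm_sub_le _ _).trans (add_le_add (hhor _) (hhor _))
    _ = _ := by ring

/-- Cauchy's estimate for a single coefficient of a generalized power series. -/
theorem GenPowerSeries.IsExpansionOf.norm_coeff_mul_rpow_le {X : Type*} [NormedAddCommGroup X]
    [NormedSpace ℂ X] [CompleteSpace X] {ρ r M C : ℝ} (hr : 0 < r) (hrρ : r < ρ) {f : ℂ → X}
    (hhol : DifferentiableOn ℂ f (Omega ρ ⊤)) (hbdd : ∀ w ∈ Omega ρ ⊤, ‖f w‖ ≤ M)
    {p : GenPowerSeries X} (hp : p.IsExpansionOf f)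
    (hC : ∀ w : ℂ, w.re = Real.log r → ‖f w‖ ≤ C) (α : p.exponents) :
    ‖p.coeff α‖ * r ^ (α : ℝ) ≤ C := by
  obtain ⟨δ₀, hδ₀, hconv, hsum⟩ := hp
  have hα : 0 ≤ (α : ℝ) := p.nonneg _ α.2
  have : Countable p.exponents := p.countable.to_subtype
  set L := Real.log r with hL
  set x₀ := min L (Real.log δ₀) - 1 with hx₀
  have hx₀L : x₀ ≤ L := by linarith [min_le_left L (Real.log δ₀)]
  have hx₀δ : x₀ < Real.log δ₀ := by linarith [min_le_right L (Real.log δ₀)]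
  have hLρ : L < Real.log ρ := Real.log_lt_log hr hrρ
  have hmem : ∀ w : ℂ, w.re ∈ Set.Icc x₀ L → w ∈ Omega ρ ⊤ := fun w hw =>
    ⟨hw.2.trans_lt hLρ, ENNReal.ofReal_lt_top⟩
  have hM : 0 ≤ M := (norm_nonneg _).trans (hbdd (L : ℂ) (hmem _ (by simp [hx₀L])))
  set g : ℂ → X := fun w => Complex.exp (-(((α : ℝ) : ℂ) * w)) • f w with hg
  have hnorm : ∀ w, ‖g w‖ = Real.exp (-(α * w.re)) * ‖f w‖ := fun w => by
    rw [hg, norm_smul, Complex.norm_exp]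
    simp
  have hgd : DifferentiableOn ℂ g {w : ℂ | w.re ∈ Set.Icc x₀ L} :=
    DifferentiableOn.smul (by fun_prop) (hhol.mono hmem)
  have hgb : ∀ w : ℂ, w.re ∈ Set.Icc x₀ L → ‖g w‖ ≤ Real.exp (-(α * x₀)) * M := fun w hw => by
    rw [hnorm]
    gcongr
    · exact hw.1
    · exact hbdd w (hmem w hw)
  have hmean : Tendsto (fun T : ℝ => ((2 * T : ℝ) : ℂ)⁻¹ •
      ∫ y in (-T)..T, g (x₀ + y * Complex.I)) atTop (𝓝 (p.coeff α)) := by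
    have h := tendsto_mean_of_hasSum_exp (i := α)
      (b := fun β : p.exponents => Complex.exp ((((β : ℝ) - α : ℝ) : ℂ) * x₀) • p.coeff β)
      (freq := fun β => (β : ℝ) - α) (F := fun y : ℝ => g (x₀ + y * Complex.I)) ?_ ?_ ?_
    · simpa using h
    · refine Summable.of_nonneg_of_le (fun _ => norm_nonneg _) (fun β => ?_)
        (hconv.mul_left (Real.exp (-(α * x₀))))
      have hβ : 0 ≤ (β : ℝ) := p.nonneg _ β.2
      rw [norm_smul, Complex.norm_exp, ← Complex.ofReal_mul, Complex.ofReal_re,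
        Real.rpow_def_of_pos hδ₀, mul_comm ‖p.coeff β‖, ← mul_assoc, ← Real.exp_add]
      gcongr
      nlinarith
    · intro β
      rw [sub_eq_zero, Subtype.ext_iff]
    · intro y
      have hs := (hsum (x₀ + y * Complex.I)
        ⟨by simpa using hx₀δ, ENNReal.ofReal_lt_top⟩).const_smul
          (Complex.exp (-(((α : ℝ) : ℂ) * (x₀ + y * Complex.I))))
      convert hs using 2 with β
      rw [smul_smul, smul_smul, ← Complex.exp_add, ← Complex.exp_add]
      congr 2
      push_cast
      ring
  have hbound : ∀ᶠ T : ℝ in atTop, ‖((2 * T : ℝ) : ℂ)⁻¹ •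
      ∫ y in (-T)..T, g (x₀ + y * Complex.I)‖ ≤
        Real.exp (-(α * L)) * C + T⁻¹ * (Real.exp (-(α * x₀)) * M * (L - x₀)) := by
    filter_upwards [eventually_gt_atTop 0] with T hT
    have h₁ := norm_vertical_integral_sub_le hx₀L hgd hgb T
    have h₂ : ‖∫ y in (-T)..T, g (L + y * Complex.I)‖ ≤ Real.exp (-(α * L)) * C * |T - -T| := by
      refine intervalIntegral.norm_integral_le_of_norm_le_const fun t _ => ?_
      have hre : ((L : ℂ) + t * Complex.I).re = L := by simp
      rw [hnorm, hre]
      gcongr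
      exact hC _ hre
    rw [abs_of_pos (by linarith)] at h₂
    have h₃ := norm_le_norm_add_norm_sub' (∫ y in (-T)..T, g (x₀ + y * Complex.I))
      (∫ y in (-T)..T, g (L + y * Complex.I))
    rw [norm_smul, norm_inv, Complex.norm_real, Real.norm_of_nonneg (by positivity),
      inv_mul_le_iff₀ (by positivity)]
    have h₄ : 2 * T * (Real.exp (-(α * L)) * C +
        T⁻¹ * (Real.exp (-(α * x₀)) * M * (L - x₀))) =
        Real.exp (-(α * L)) * C * (T - -T) + 2 * (Real.exp (-(α * x₀)) * M * (L - x₀)) := by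
      field_simp
      ring
    rw [h₄]
    linarith
  have hlim : Tendsto (fun T : ℝ => Real.exp (-(α * L)) * C +
      T⁻¹ * (Real.exp (-(α * x₀)) * M * (L - x₀))) atTop (𝓝 (Real.exp (-(α * L)) * C)) := by
    simpa using (tendsto_inv_atTop_zero.mul_const
      (Real.exp (-(α * x₀)) * M * (L - x₀))).const_add (Real.exp (-(α * L)) * C)
  have hle := le_of_tendsto_of_tendsto hmean.norm hlim hbound
  rw [Real.rpow_def_of_pos hr, ← hL, mul_comm L]
  calc ‖p.coeff α‖ * Real.exp (α * L)
      ≤ Real.exp (-(α * L)) * C * Real.exp (α * L) := by gcongr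
    _ = C := by rw [mul_right_comm, ← Real.exp_add]; simp

theorem cauchy_type_coefficient_estimate
    {X : Type*} [NormedAddCommGroup X] [NormedSpace ℂ X] [CompleteSpace X]
    (Rhat ε : ℝ) (hRhat : 0 < Rhat) (hε : 0 < ε)
    (f : ℂ → X)
    (hhol : DifferentiableOn ℂ f (Omega (Rhat + ε) ⊤))
    (hbdd : ∃ M : ℝ, ∀ w ∈ Omega (Rhat + ε) ⊤, ‖f w‖ ≤ M)
    (p : GenPowerSeries X) (hp : p.IsExpansionOf f)
    (R : ℝ) (hR : 0 < R) (hRR : R < Rhat) :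
    (∑' α : p.exponents, ENNReal.ofReal (‖p.coeff α‖ * R ^ (α : ℝ)) ≤
      (⨆ w ∈ {w : ℂ | w.re = Real.log Rhat}, ENNReal.ofReal ‖f w‖) *
        ∑' α : p.exponents, ENNReal.ofReal ((R / Rhat) ^ (α : ℝ))) ∧
    ((Summable fun α : p.exponents => (R / Rhat) ^ (α : ℝ)) → p.ConvergesNormally R) := by
  obtain ⟨M, hM⟩ := hbdd
  have hlt : Rhat < Rhat + ε := by linarith
  set s := ⨆ w ∈ {w : ℂ | w.re = Real.log Rhat}, ENNReal.ofReal ‖f w‖ with hs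
  have hs_top : s ≠ ⊤ := by
    refine ne_top_of_le_ne_top ENNReal.ofReal_ne_top (iSup₂_le fun w hw =>
      ENNReal.ofReal_le_ofReal (hM w ⟨?_, ENNReal.ofReal_lt_top⟩))
    exact (show w.re = Real.log Rhat from hw).trans_lt (Real.log_lt_log hRhat hlt)
  have hsup : ∀ w : ℂ, w.re = Real.log Rhat → ‖f w‖ ≤ s.toReal := fun w hw =>
    (ENNReal.ofReal_le_iff_le_toReal hs_top).1
      (le_iSup₂ (f := fun w (_ : w ∈ {w : ℂ | w.re = Real.log Rhat}) => ENNReal.ofReal ‖f w‖) w hw)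
  have hterm : ∀ α : p.exponents,
      ‖p.coeff α‖ * R ^ (α : ℝ) ≤ s.toReal * (R / Rhat) ^ (α : ℝ) := fun α => by
    have h := hp.norm_coeff_mul_rpow_le hRhat hlt hhol hM hsup α
    rw [Real.div_rpow hR.le hRhat.le, mul_div_assoc', le_div_iff₀ (by positivity), mul_right_comm]
    gcongr
  constructor
  · rw [← ENNReal.tsum_mul_left]
    refine ENNReal.tsum_le_tsum fun α => ?_
    rw [← ENNReal.ofReal_toReal hs_top, ← ENNReal.ofReal_mul ENNReal.toReal_nonneg]
    exact ENNReal.ofReal_le_ofReal (hterm α)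
  · intro hsummable
    exact Summable.of_nonneg_of_le (fun α => by positivity) hterm (hsummable.mul_left _)
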